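/- Let p be an odd prime, q = p^m, and n ≥ 1. If f : L∖{0} → K is difference balanced and, for b ∈ K, d_b := |{x ∈ L∖{0} : f(x) = b}|, then Σ_{b ∈ K} d_b² = q^{2n−1} − 2q^{n−1} + 1. -/

import Mathlib

/-- A function `f : L∖{0} → K` is balanced. -/
def IsBalanced {K L : Type*} [Field K] [Field L] (q n : ℕ) (f : L → K) : Prop :=
  Nat.card {x : L | x ≠ 0 ∧ f x = 0} = q ^ (n - 1) - 1 ∧
    ∀ b : K, b ≠ 0 → Nat.card {x : L | x ≠ 0 ∧ f x = b} = q ^ (n - 1)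

/-- A function `f : L∖{0} → K` is difference balanced. -/
def IsDiffBalanced {K L : Type*} [Field K] [Field L] (q n : ℕ) (f : L → K) : Prop :=
  ∀ a : L, a ≠ 0 → a ≠ 1 → IsBalanced q n (fun x => f (a * x) - f x)

/-!
Count the pairs `(x, y)` of nonzero elements with `f x = f y`. Sorted by the common value `b`, there
are `∑ b, d_b ^ 2` of them. Sorted by the quotient `a = y * x⁻¹`, the quotient `1` contributes
`q ^ n - 1` pairs, and each of the other `q ^ n - 2` quotients contributes the number
`q ^ (n - 1) - 1` of nonzero zeros of `x ↦ f (a * x) - f x`.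
-/

open Finset

lemma sum_sq_card_fiber_eq_sum_card_fiber {α β : Type*} [Fintype α] [Fintype β] [DecidableEq β]
    (f : α → β) :
    ∑ b, #{x | f x = b} ^ 2 = ∑ x, #{y | f y = f x} :=
  calc ∑ b, #{x | f x = b} ^ 2
    _ = ∑ b, ∑ x with f x = b, #{y | f y = f x} := by
      refine sum_congr rfl fun b _ ↦ ?_
      rw [sum_congr rfl fun x hx ↦ by rw [(mem_filter.mp hx).2], sum_const, smul_eq_mul, sq]
    _ = ∑ x, #{y | f y = f x} := sum_fiberwise _ _ _

section Group

variable {G β : Type*} [Group G] [Fintype G] [Fintype β] [DecidableEq β]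

lemma sum_sq_card_fiber_eq_sum_card_mul_left (f : G → β) :
    ∑ b, #{x | f x = b} ^ 2 = ∑ a, #{x | f (a * x) = f x} :=
  calc ∑ b, #{x | f x = b} ^ 2
    _ = ∑ x, #{y | f y = f x} := sum_sq_card_fiber_eq_sum_card_fiber f
    _ = ∑ x, #{a | f (a * x) = f x} := sum_congr rfl fun x _ ↦
      (card_equiv (Equiv.mulRight x) fun a ↦ by simp).symm
    _ = ∑ a, #{x | f (a * x) = f x} :=
      sum_card_bipartiteAbove_eq_sum_card_bipartiteBelow fun x a ↦ f (a * x) = f x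

lemma sum_sq_card_fiber_of_card_mul_left_eq (f : G → β) {l : ℕ}
    (hf : ∀ a, a ≠ 1 → #{x | f (a * x) = f x} = l) :
    ∑ b, #{x | f x = b} ^ 2 = Fintype.card G + (Fintype.card G - 1) * l := by
  classical
  calc ∑ b, #{x | f x = b} ^ 2
    _ = ∑ a, #{x | f (a * x) = f x} := sum_sq_card_fiber_eq_sum_card_mul_left f
    _ = #{x | f (1 * x) = f x} + ∑ a ∈ univ.erase 1, #{x | f (a * x) = f x} :=
      (add_sum_erase _ _ (mem_univ 1)).symm
    _ = Fintype.card G + (Fintype.card G - 1) * l := by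
      rw [sum_congr rfl fun a ha ↦ hf a (ne_of_mem_erase ha)]
      simp

end Group

lemma natCard_ne_zero_and_eq_card_units {M : Type*} [GroupWithZero M] [Fintype Mˣ]
    (P : M → Prop) [DecidablePred P] :
    Nat.card {x : M | x ≠ 0 ∧ P x} = #{u : Mˣ | P u} := by
  have units_equiv : {u : Mˣ // P u} ≃ {x : M | x ≠ 0 ∧ P x} :=
    (unitsEquivNeZero.subtypeEquiv fun _ ↦ Iff.rfl).trans
      (Equiv.subtypeSubtypeEquivSubtypeInter (· ≠ 0) P)
  rw [← Nat.card_congr units_equiv, Nat.card_eq_fintype_card, Fintype.card_subtype]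

theorem stmt_1_general {M β : Type*} [GroupWithZero M] [Fintype M] [Fintype β] {q n : ℕ}
    (hM : Fintype.card M = q ^ n) (f : M → β)
    (hf : ∀ a : M, a ≠ 0 → a ≠ 1 →
      Nat.card {x : M | x ≠ 0 ∧ f (a * x) = f x} = q ^ (n - 1) - 1) :
    ∑ b : β, (Nat.card {x : M | x ≠ 0 ∧ f x = b} : ℤ) ^ 2 =
      (q : ℤ) ^ (2 * n - 1) - 2 * (q : ℤ) ^ (n - 1) + 1 := by
  classical
  have one_lt_card : 1 < q ^ n := hM ▸ Fintype.one_lt_card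
  obtain ⟨k, rfl⟩ : ∃ k, n = k + 1 :=
    Nat.exists_eq_succ_of_ne_zero (by rintro rfl; simp at one_lt_card)
  have q_pos : 0 < q := Nat.pos_of_ne_zero (by rintro rfl; simp at one_lt_card)
  have shift_card (a : Mˣ) (ha : a ≠ 1) : #{u : Mˣ | f ↑(a * u) = f u} = q ^ k - 1 := by
    simpa only [natCard_ne_zero_and_eq_card_units, Units.val_mul, Nat.add_sub_cancel] using
      hf a a.ne_zero (Units.val_eq_one.not.mpr ha)
  have sum_sq := sum_sq_card_fiber_of_card_mul_left_eq (fun u : Mˣ ↦ f u) shift_card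
  rw [Fintype.card_units, hM] at sum_sq
  simp only [natCard_ne_zero_and_eq_card_units]
  zify [Nat.one_le_pow k q q_pos, one_lt_card.le, Nat.le_sub_one_of_lt one_lt_card] at sum_sq
  rw [sum_sq, Nat.add_sub_cancel, show 2 * (k + 1) - 1 = 2 * k + 1 by lia]
  ring

/-- If `f` is difference balanced and `d_b` is the number of nonzero preimages of `b`,
then `Σ_{b ∈ K} d_b² = q^{2n−1} − 2q^{n−1} + 1`. -/
theorem stmt_1 {K L : Type*} [Field K] [Field L] [Algebra K L] [Fintype K] [Fintype L]
    (p m n q : ℕ) (hp : p.Prime) (hodd : Odd p) (hm : 1 ≤ m) (hn : 1 ≤ n)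
    (hq : q = p ^ m) (hK : Fintype.card K = q) (hL : Fintype.card L = q ^ n)
    (f : L → K) (hf : IsDiffBalanced q n f) :
    ∑ b : K, (Nat.card {x : L | x ≠ 0 ∧ f x = b} : ℤ) ^ 2 =
      (q : ℤ) ^ (2 * n - 1) - 2 * (q : ℤ) ^ (n - 1) + 1 := by
  refine stmt_1_general hL f fun a ha_ne_zero ha_ne_one ↦ ?_
  simpa only [sub_eq_zero] using (hf a ha_ne_zero ha_ne_one).1
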